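/- Let (X, A_X) be any network, δ > 0 a constant, and x, x' ∈ X nodes such that the directed minimum chain cost satisfies ũ*_X(x,x') ≥ δ. Then there exists a partition of the node set X into two blocks B and B' with x ∈ B and x' ∈ B' such that A_X(b, b') ≥ δ for all b ∈ B and b' ∈ B'. -/

import Mathlib

noncomputable section

/-- A dissimilarity function on a node set: nonnegative and zero exactly on the diagonal.
It need not be symmetric nor satisfy the triangle inequality. -/
def IsDissim {X : Type} (A : X → X → ℝ) : Prop :=
  (∀ x x', 0 ≤ A x x') ∧ (∀ x x', A x x' = 0 ↔ x = x')

/-- A symmetric dissimilarity. -/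
def IsSym {X : Type} (A : X → X → ℝ) : Prop := ∀ x x', A x x' = A x' x

/-- An ultrametric: nonnegative, zero exactly on the diagonal, symmetric, and
satisfying the strong triangle inequality. -/
def IsUltrametric {X : Type} (u : X → X → ℝ) : Prop :=
  (∀ x x', 0 ≤ u x x') ∧ (∀ x x', u x x' = 0 ↔ x = x') ∧
    (∀ x x', u x x' = u x' x) ∧
    (∀ x x' x'', u x x'' ≤ max (u x x') (u x' x''))

/-- The cost of the chain `x :: l`: the maximum dissimilarity over consecutive links. -/
def chainCost {X : Type} (A : X → X → ℝ) : X → List X → ℝ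
  | _, [] => 0
  | x, y :: l => max (A x y) (chainCost A y l)

/-- The set of costs of chains from `x` to `x'`. -/
def chainCosts {X : Type} (A : X → X → ℝ) (x x' : X) : Set ℝ :=
  {c | ∃ l : List X, (x :: l).getLast (List.cons_ne_nil x l) = x' ∧ chainCost A x l = c}

/-- The directed minimum chain cost `ũ*_X(x,x')`: minimum cost over all chains from `x` to `x'`. -/
def minChainCost {X : Type} (A : X → X → ℝ) (x x' : X) : ℝ :=
  sInf (chainCosts A x x')

/-- The nonreciprocal ultrametric `u^NR`. -/
def nonrecipUltra {X : Type} (A : X → X → ℝ) (x x' : X) : ℝ :=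
  max (minChainCost A x x') (minChainCost A x' x)

/-- The reciprocal ultrametric `u^R`. -/
def recipUltra {X : Type} (A : X → X → ℝ) (x x' : X) : ℝ :=
  minChainCost (fun a b => max (A a b) (A b a)) x x'

/-- The unilateral ultrametric `u^U`. -/
def uniUltra {X : Type} (A : X → X → ℝ) (x x' : X) : ℝ :=
  minChainCost (fun a b => min (A a b) (A b a)) x x'

/-- The minimum loop cost `mlc(X, A_X)`: minimum cost over loops, i.e. chains from some
node `x` back to itself containing at least one node different from `x`. -/
def mlc {X : Type} (A : X → X → ℝ) : ℝ :=
  sInf {c | ∃ (x : X) (l : List X),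
    (x :: l).getLast (List.cons_ne_nil x l) = x ∧ (∃ y ∈ l, y ≠ x) ∧ chainCost A x l = c}

/-- The separation `sep(X, A_X)`: minimum dissimilarity over pairs of distinct nodes. -/
def sep {X : Type} (A : X → X → ℝ) : ℝ :=
  sInf {c | ∃ x x' : X, x ≠ x' ∧ A x x' = c}

/-- A hierarchical clustering method: assigns to every (finite) network an output
two-variable function on the same node set. -/
abbrev HCMethod := ∀ (X : Type) [Fintype X], (X → X → ℝ) → X → X → ℝ

/-- A hierarchical clustering method outputs an ultrametric on every network. -/
def IsHCMethod (H : HCMethod) : Prop :=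
  ∀ (X : Type) [Fintype X] (A : X → X → ℝ), IsDissim A → IsUltrametric (H X A)

/-- `p, q` are the two (distinct) nodes of a two-node set. -/
def TwoNode {X : Type} (p q : X) : Prop := p ≠ q ∧ ∀ x : X, x = p ∨ x = q

/-- Axiom of Value (A1): on every two-node network the output clusters the two nodes at
the maximum of the two dissimilarities. -/
def AxiomValue (H : HCMethod) : Prop :=
  ∀ (X : Type) [Fintype X] (p q : X), TwoNode p q →
    ∀ A : X → X → ℝ, IsDissim A → H X A p q = max (A p q) (A q p)

/-- Axiom of Transformation (A2): dissimilarity-reducing maps do not increase output values. -/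
def AxiomTransform (H : HCMethod) : Prop :=
  ∀ (X Y : Type) [Fintype X] [Fintype Y] (AX : X → X → ℝ) (AY : Y → Y → ℝ),
    IsDissim AX → IsDissim AY →
    ∀ φ : X → Y, (∀ x x', AY (φ x) (φ x') ≤ AX x x') →
    ∀ x x' : X, H Y AY (φ x) (φ x') ≤ H X AX x x'

/-- The canonical dissimilarity `A_{n,α,β}` on `Fin n`: `α` for `i > j`, `β` for `i < j`,
`0` on the diagonal. -/
def canonDissim (n : ℕ) (α β : ℝ) : Fin n → Fin n → ℝ :=
  fun i j => if i = j then 0 else if j < i then α else β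

/-- Extended Axiom of Value (A1'): on every permuted canonical network `Δ_n(α,β,Π)` the
output ultrametric equals `max(α,β)` off the diagonal. -/
def ExtAxiomValue (H : HCMethod) : Prop :=
  ∀ (n : ℕ) (α β : ℝ), 0 < α → 0 < β → ∀ π : Equiv.Perm (Fin n),
    ∀ i j : Fin n, i ≠ j →
      H (Fin n) (fun i j => canonDissim n α β (π i) (π j)) i j = max α β

/-- Alternative Axiom of Value (A1''): on every two-node network the output clusters the
two nodes at the minimum of the two dissimilarities. -/
def AltAxiomValue (H : HCMethod) : Prop :=
  ∀ (X : Type) [Fintype X] (p q : X), TwoNode p q →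
    ∀ A : X → X → ℝ, IsDissim A → H X A p q = min (A p q) (A q p)

/-- Agnostic Axiom of Value (A1'''): on every two-node network the output value lies
between the minimum and maximum of the two dissimilarities. -/
def AgnAxiomValue (H : HCMethod) : Prop :=
  ∀ (X : Type) [Fintype X] (p q : X), TwoNode p q →
    ∀ A : X → X → ℝ, IsDissim A →
      min (A p q) (A q p) ≤ H X A p q ∧ H X A p q ≤ max (A p q) (A q p)

/-!
Let `B` be the set of nodes reachable from `x` through links of dissimilarity less than `δ`, and
`B'` its complement. A link from `B` to `B'` shorter than `δ` would make its endpoint reachable, and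
`x' ∈ B` would give a chain from `x` to `x'` of cost less than `δ`.
-/

section MinChainCost

variable {X : Type} (A : X → X → ℝ)

lemma chainCost_nonneg (x : X) (l : List X) : 0 ≤ chainCost A x l := by
  cases l with
  | nil => exact le_rfl
  | cons y l => exact le_max_of_le_right (chainCost_nonneg y l)

lemma chainCosts_nonempty (x x' : X) : (chainCosts A x x').Nonempty :=
  ⟨_, [x'], rfl, rfl⟩

lemma bddBelow_chainCosts (x x' : X) : BddBelow (chainCosts A x x') := by
  refine ⟨0, ?_⟩
  rintro _ ⟨l, -, rfl⟩
  exact chainCost_nonneg A x l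

variable {A} {δ : ℝ}

lemma chainCost_lt_iff_isChain (hδ : 0 < δ) {x : X} {l : List X} :
    chainCost A x l < δ ↔ (x :: l).IsChain (fun a b => A a b < δ) := by
  induction l generalizing x with
  | nil => simp only [chainCost, hδ, List.isChain_singleton]
  | cons y l ih => rw [chainCost, max_lt_iff, List.isChain_cons_cons, ih]

lemma minChainCost_lt_iff_reflTransGen (hδ : 0 < δ) {x x' : X} :
    minChainCost A x x' < δ ↔ Relation.ReflTransGen (fun a b => A a b < δ) x x' := by
  rw [minChainCost, csInf_lt_iff (bddBelow_chainCosts A x x') (chainCosts_nonempty A x x')]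
  constructor
  · rintro ⟨_, ⟨l, hlast, rfl⟩, hcost⟩
    exact List.relationReflTransGen_of_exists_isChain_cons l
      ((chainCost_lt_iff_isChain hδ).1 hcost) hlast
  · intro hreach
    obtain ⟨l, hchain, hlast⟩ := List.exists_isChain_cons_of_relationReflTransGen hreach
    exact ⟨_, ⟨l, hlast, rfl⟩, (chainCost_lt_iff_isChain hδ).2 hchain⟩

theorem partition_of_large_minChainCost_general (hδ : 0 < δ) {x x' : X}
    (h : δ ≤ minChainCost A x x') :
    ∃ B B' : Set X, B ∪ B' = Set.univ ∧ B ∩ B' = ∅ ∧ x ∈ B ∧ x' ∈ B' ∧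
      ∀ b ∈ B, ∀ b' ∈ B', δ ≤ A b b' := by
  let B : Set X := {y | Relation.ReflTransGen (fun a b => A a b < δ) x y}
  have hx' : x' ∉ B := fun hreach =>
    h.not_gt ((minChainCost_lt_iff_reflTransGen hδ).2 hreach)
  have hlink : ∀ b ∈ B, ∀ b' ∈ Bᶜ, δ ≤ A b b' := fun b hb b' hb' =>
    not_lt.1 fun hlt => hb' (Relation.ReflTransGen.tail hb hlt)
  exact ⟨B, Bᶜ, B.union_compl_self, B.inter_compl_self, Relation.ReflTransGen.refl, hx', hlink⟩

end MinChainCost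

/-- If the directed minimum chain cost from `x` to `x'` is at least `δ`, the
node set can be partitioned into two blocks `B ∋ x` and `B' ∋ x'` such that every
dissimilarity from `B` to `B'` is at least `δ`. -/
theorem partition_of_large_minChainCost
    (X : Type) [Fintype X] (A : X → X → ℝ) (hA : IsDissim A)
    (δ : ℝ) (hδ : 0 < δ) (x x' : X) (h : δ ≤ minChainCost A x x') :
    ∃ B B' : Set X, B ∪ B' = Set.univ ∧ B ∩ B' = ∅ ∧ x ∈ B ∧ x' ∈ B' ∧
      ∀ b ∈ B, ∀ b' ∈ B', δ ≤ A b b' :=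
  partition_of_large_minChainCost_general hδ h
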